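/- For a metrizable space X the following are equivalent: (1) player TWO has a winning strategy in the game G^ω_d(𝒪,𝒪) on X; (2) X is ultraparacompact; (3) player TWO has a winning strategy in the game G^1_d(𝒪,𝒪) on X. -/

import Mathlib

namespace SSG

/-- A family of subsets of a topological space is *discrete* if every point has a
neighborhood meeting at most one member of the family. -/
def IsDiscreteFam {X : Type*} [TopologicalSpace X] (𝒜 : Set (Set X)) : Prop :=
  ∀ x : X, ∃ U ∈ nhds x, {A | A ∈ 𝒜 ∧ (A ∩ U).Nonempty}.Subsingleton

/-- A family of open subsets covering the whole space. -/
def IsOpenCover {X : Type*} [TopologicalSpace X] (𝒰 : Set (Set X)) : Prop :=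
  (∀ U ∈ 𝒰, IsOpen U) ∧ ⋃₀ 𝒰 = Set.univ

/-- A legal move of TWO in the selective strong screenability game, in response to the
open cover `𝒰` played by ONE: a discrete family of open sets, each contained in some
member of `𝒰`. -/
def LegalTwoMove {X : Type*} [TopologicalSpace X] (𝒰 𝒱 : Set (Set X)) : Prop :=
  IsDiscreteFam 𝒱 ∧ ∀ V ∈ 𝒱, IsOpen V ∧ ∃ U ∈ 𝒰, V ⊆ U

/-- ONE has a winning strategy in the game `G^ω_d(𝒪, 𝒪_Y)` on `X`:
there is a strategy `σ` (a function from finite histories of TWO's moves to open covers)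
such that for every play in which TWO moves legally, the union of TWO's families fails
to cover `Y`. -/
def OneWinsGomega (X : Type*) [TopologicalSpace X] (Y : Set X) : Prop :=
  ∃ σ : List (Set (Set X)) → Set (Set X),
    (∀ h : List (Set (Set X)), IsOpenCover (σ h)) ∧
    ∀ V : ℕ → Set (Set X),
      (∀ n : ℕ, LegalTwoMove (σ (List.ofFn fun i : Fin n => V i)) (V n)) →
      ¬ Y ⊆ ⋃ n : ℕ, ⋃₀ V n

/-- TWO has a winning strategy in the game `G^ω_d(𝒪, 𝒪_Y)` on `X`:
a strategy `τ` (from finite histories of ONE's moves, including the current inning's move,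
to TWO's responses) such that against any sequence of open covers played by ONE, all of
TWO's responses are legal and their union covers `Y`. -/
def TwoWinsGomega (X : Type*) [TopologicalSpace X] (Y : Set X) : Prop :=
  ∃ τ : List (Set (Set X)) → Set (Set X),
    ∀ U : ℕ → Set (Set X), (∀ n : ℕ, IsOpenCover (U n)) →
      (∀ n : ℕ, LegalTwoMove (U n) (τ (List.ofFn fun i : Fin (n+1) => U i))) ∧
      Y ⊆ ⋃ n : ℕ, ⋃₀ τ (List.ofFn fun i : Fin (n+1) => U i)

/-- TWO has a winning strategy in the one-inning game `G^1_d(𝒪, 𝒪_Y)` on `X`: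
every open cover of `X` admits a discrete family of open sets, each contained in some
member of the cover, whose union contains `Y`. -/
def TwoWinsGone (X : Type*) [TopologicalSpace X] (Y : Set X) : Prop :=
  ∀ 𝒰 : Set (Set X), IsOpenCover 𝒰 →
    ∃ 𝒱 : Set (Set X), LegalTwoMove 𝒰 𝒱 ∧ Y ⊆ ⋃₀ 𝒱

/-- ONE has a winning strategy in the Banach–Mazur game `MB(Y,X)`: a strategy `σ`
(from finite histories of TWO's moves to ONE's next move) which always produces a legal
move (a nonempty open set contained in TWO's last move) whenever TWO has moved legally
so far, and such that for every play in which TWO moves legally,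
`Y ∩ ⋂ₙ Oₙ` is nonempty. -/
def OneWinsMB (X : Type*) [TopologicalSpace X] (Y : Set X) : Prop :=
  ∃ σ : List (Set X) → Set X,
    (∀ T : ℕ → Set X, ∀ n : ℕ,
      (∀ k : ℕ, k < n → IsOpen (T k) ∧ (T k).Nonempty ∧
          T k ⊆ σ (List.ofFn fun i : Fin k => T i)) →
      IsOpen (σ (List.ofFn fun i : Fin n => T i)) ∧
      (σ (List.ofFn fun i : Fin n => T i)).Nonempty ∧
      ∀ k : ℕ, n = k + 1 → σ (List.ofFn fun i : Fin n => T i) ⊆ T k) ∧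
    ∀ T : ℕ → Set X,
      (∀ n : ℕ, IsOpen (T n) ∧ (T n).Nonempty ∧
          T n ⊆ σ (List.ofFn fun i : Fin n => T i)) →
      (Y ∩ ⋂ n : ℕ, σ (List.ofFn fun i : Fin n => T i)).Nonempty

/-- TWO has a winning strategy in the Banach–Mazur game `MB(Y,X)`: a strategy `τ`
(from finite histories of ONE's moves to TWO's next move) which always produces a legal
move (a nonempty open subset of ONE's last move) whenever ONE has moved legally
so far, and such that for every play in which ONE moves legally,
`Y ∩ ⋂ₙ Oₙ` is empty. -/
def TwoWinsMB (X : Type*) [TopologicalSpace X] (Y : Set X) : Prop :=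
  ∃ τ : List (Set X) → Set X,
    (∀ O : ℕ → Set X, ∀ n : ℕ,
      (∀ k : ℕ, k ≤ n → IsOpen (O k) ∧ (O k).Nonempty ∧
          ∀ j : ℕ, k = j + 1 → O k ⊆ τ (List.ofFn fun i : Fin (j+1) => O i)) →
      IsOpen (τ (List.ofFn fun i : Fin (n+1) => O i)) ∧
      (τ (List.ofFn fun i : Fin (n+1) => O i)).Nonempty ∧
      τ (List.ofFn fun i : Fin (n+1) => O i) ⊆ O n) ∧
    ∀ O : ℕ → Set X,
      (∀ n : ℕ, IsOpen (O n) ∧ (O n).Nonempty ∧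
          ∀ j : ℕ, n = j + 1 → O n ⊆ τ (List.ofFn fun i : Fin (j+1) => O i)) →
      Y ∩ ⋂ n : ℕ, O n = ∅

/-- A space is ultraparacompact if every open cover has a refinement by pairwise
disjoint open sets still covering the space. -/
def Ultraparacompact (X : Type*) [TopologicalSpace X] : Prop :=
  ∀ 𝒰 : Set (Set X), IsOpenCover 𝒰 →
    ∃ 𝒱 : Set (Set X), (∀ V ∈ 𝒱, IsOpen V ∧ ∃ U ∈ 𝒰, V ⊆ U) ∧
      𝒱.Pairwise Disjoint ∧ ⋃₀ 𝒱 = Set.univ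

/-- A space is zero-dimensional if every point has a neighborhood basis of clopen sets. -/
def ZeroDimensional (X : Type*) [TopologicalSpace X] : Prop :=
  ∀ (x : X) (U : Set X), IsOpen U → x ∈ U → ∃ V : Set X, IsClopen V ∧ x ∈ V ∧ V ⊆ U

/-- A space is strongly zero-dimensional if every *finite* open cover has a refinement
by pairwise disjoint open sets still covering the space. -/
def StronglyZeroDim (X : Type*) [TopologicalSpace X] : Prop :=
  ∀ 𝒰 : Set (Set X), 𝒰.Finite → IsOpenCover 𝒰 →
    ∃ 𝒱 : Set (Set X), (∀ V ∈ 𝒱, IsOpen V ∧ ∃ U ∈ 𝒰, V ⊆ U) ∧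
      𝒱.Pairwise Disjoint ∧ ⋃₀ 𝒱 = Set.univ

/-- `X` has a π-base consisting of nontrivial connected (open) sets. -/
def HasConnectedPiBase (X : Type*) [TopologicalSpace X] : Prop :=
  ∃ P : Set (Set X), (∀ B ∈ P, IsOpen B ∧ IsConnected B ∧ B.Nontrivial) ∧
    ∀ U : Set X, IsOpen U → U.Nonempty → ∃ B ∈ P, B ⊆ U

/-!
Let TWO follow a winning strategy and let ONE play only covers from a sequence `𝒰₀, 𝒰₁, …` of open
covers of mesh tending to zero. For a position `s` in which ONE is about to move, let `D s` be the
set of points which, whatever `𝒰 n` ONE plays next, lie in the closure of the union of TWO's answer.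
If some point were in no `D s`, ONE could avoid it forever, so the countably many closed sets `D s`
cover the space. TWO's answers to the `𝒰 n` at `s` induce clopen partitions of `D s` of arbitrarily
small mesh, so disjoint closed subsets of `D s` are separated by clopen subsets of `D s`. This
separation property passes from countably many closed pieces to the whole space, and in a
paracompact space it allows a shrinking of a locally finite refinement to be made clopen, hence
disjoint.
-/

section

open Set Topology

variable {X : Type*} [TopologicalSpace X]

theorem IsDiscreteFam.locallyFinite {𝒱 : Set (Set X)} (h𝒱 : IsDiscreteFam 𝒱) :
    LocallyFinite ((↑) : 𝒱 → Set X) := by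
  intro x
  obtain ⟨U, hU, hsub⟩ := h𝒱 x
  refine ⟨U, hU, Set.Subsingleton.finite ?_⟩
  exact fun V hV W hW => Subtype.ext (hsub ⟨V.2, hV⟩ ⟨W.2, hW⟩)

theorem IsDiscreteFam.mem_closure_sUnion {𝒱 : Set (Set X)} (h𝒱 : IsDiscreteFam 𝒱) {x : X} :
    x ∈ closure (⋃₀ 𝒱) ↔ ∃ V ∈ 𝒱, x ∈ closure V := by
  simp only [sUnion_eq_iUnion, h𝒱.locallyFinite.closure_iUnion, mem_iUnion, Subtype.exists,
    exists_prop]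

theorem IsDiscreteFam.pairwise_disjoint {𝒱 : Set (Set X)} (h𝒱 : IsDiscreteFam 𝒱) :
    𝒱.Pairwise Disjoint := by
  intro V hV W hW hne
  refine disjoint_left.2 fun x hxV hxW => hne ?_
  obtain ⟨U, hU, hsub⟩ := h𝒱 x
  have hxU : x ∈ U := mem_of_mem_nhds hU
  exact hsub ⟨hV, x, hxV, hxU⟩ ⟨hW, x, hxW, hxU⟩

theorem isDiscreteFam_of_pairwise_disjoint {𝒱 : Set (Set X)} (hopen : ∀ V ∈ 𝒱, IsOpen V)
    (hcover : ⋃₀ 𝒱 = univ) (hdisj : 𝒱.Pairwise Disjoint) : IsDiscreteFam 𝒱 := by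
  intro x
  obtain ⟨W, hW, hxW⟩ : x ∈ ⋃₀ 𝒱 := hcover ▸ mem_univ x
  refine ⟨W, (hopen W hW).mem_nhds hxW, ?_⟩
  have eq_W : ∀ V ∈ 𝒱, (V ∩ W).Nonempty → V = W := fun V hV hVW =>
    hdisj.eq hV hW (not_disjoint_iff_nonempty_inter.2 hVW)
  exact fun V hV V' hV' => (eq_W V hV.1 hV.2).trans (eq_W V' hV'.1 hV'.2).symm

theorem IsDiscreteFam.isLocallyConstant {Y : Type*} [TopologicalSpace Y] {𝒱 : Set (Set X)}
    (h𝒱 : IsDiscreteFam 𝒱) {g : Y → X} (hg : Continuous g) {f : Y → Set X}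
    (hf : ∀ y, f y ∈ 𝒱) (hgf : ∀ y, g y ∈ closure (f y)) : IsLocallyConstant f := by
  refine (IsLocallyConstant.iff_eventually_eq f).2 fun y => ?_
  obtain ⟨U, hU, hsub⟩ := h𝒱 (g y)
  have meets : ∀ z, U ∈ 𝓝 (g z) → (f z ∩ U).Nonempty := fun z hz =>
    inter_comm U (f z) ▸ mem_closure_iff_nhds.1 (hgf z) U hz
  filter_upwards [hg.continuousAt.eventually (eventually_mem_nhds_iff.2 hU)] with z hz
  exact hsub ⟨hf z, meets z hz⟩ ⟨hf y, meets y hU⟩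

theorem ultraparacompact_iff_twoWinsGone : Ultraparacompact X ↔ TwoWinsGone X univ := by
  constructor
  · intro h 𝒰 h𝒰
    obtain ⟨𝒱, href, hdisj, hcover⟩ := h 𝒰 h𝒰
    have hdiscrete := isDiscreteFam_of_pairwise_disjoint (fun V hV => (href V hV).1) hcover hdisj
    exact ⟨𝒱, ⟨hdiscrete, href⟩, hcover.ge⟩
  · intro h 𝒰 h𝒰
    obtain ⟨𝒱, ⟨hdiscrete, href⟩, hcover⟩ := h 𝒰 h𝒰
    exact ⟨𝒱, href, hdiscrete.pairwise_disjoint, univ_subset_iff.1 hcover⟩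

theorem TwoWinsGone.twoWinsGomega {Y : Set X} (h : TwoWinsGone X Y) : TwoWinsGomega X Y := by
  choose! answer hlegal hcover using h
  refine ⟨fun s => answer (s.getLastD ∅), fun 𝒰 h𝒰 => ?_⟩
  have hlast (n : ℕ) : (List.ofFn fun i : Fin (n + 1) => 𝒰 i).getLastD ∅ = 𝒰 n := by
    rw [List.ofFn_succ_last, List.getLastD_concat, Fin.val_last]
  simp only [hlast]
  exact ⟨fun n => hlegal _ (h𝒰 n), subset_iUnion_of_subset 0 (hcover _ (h𝒰 0))⟩

/-- A space is *ultranormal* if any two disjoint closed sets are separated by a clopen set, that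
is, if its large inductive dimension is at most zero. -/
def Ultranormal (X : Type*) [TopologicalSpace X] : Prop :=
  ∀ ⦃A B : Set X⦄, IsClosed A → IsClosed B → Disjoint A B →
    ∃ C : Set X, IsClopen C ∧ A ⊆ C ∧ Disjoint C B

theorem exists_isClopen_of_iInter_eq_empty {A B : Set X} {S T : ℕ → Set X}
    (hS : ∀ n, IsClopen (S n)) (hT : ∀ n, IsClopen (T n)) (hAS : ∀ n, A ⊆ S n)
    (hBT : ∀ n, B ⊆ T n) (hST : ⋂ n, S n ∩ T n = ∅) :
    ∃ C : Set X, IsClopen C ∧ A ⊆ C ∧ Disjoint C B := by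
  -- `E n` holds the points that leave `S n ∩ T n` first at stage `n`; those leaving through `T n`
  -- go to the side of `A`.
  let E : ℕ → Set X := disjointed fun n => (S n ∩ T n)ᶜ
  have hE (n : ℕ) : IsClopen (E n) :=
    disjointedRec (fun _ m ht => ht.diff ((hS m).inter (hT m)).compl) ((hS n).inter (hT n)).compl
  have iUnion_E : ⋃ n, E n = univ := by
    rw [iUnion_disjointed, ← compl_iInter, hST, compl_empty]
  let C : Set X := ⋃ n, E n \ T n
  let C' : Set X := ⋃ n, E n ∩ T n
  have hcover : C ∪ C' = univ := by
    simp only [C, C', ← iUnion_union_distrib, sdiff_union_inter, iUnion_E]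
  have hC : IsOpen C := isOpen_iUnion fun n => ((hE n).diff (hT n)).isOpen
  have hC' : IsOpen C' := isOpen_iUnion fun n => ((hE n).inter (hT n)).isOpen
  have hdisj : Disjoint C C' := by
    refine disjoint_iUnion_left.2 fun n => disjoint_iUnion_right.2 fun m => ?_
    rcases eq_or_ne n m with rfl | hnm
    · exact disjoint_sdiff_left.mono_right inter_subset_right
    · exact (disjoint_disjointed _ hnm).mono sdiff_subset inter_subset_left
  have hAC' : Disjoint A C' := by
    refine disjoint_iUnion_right.2 fun n => disjoint_left.2 fun x hxA hx => ?_
    exact disjointed_subset _ n hx.1 ⟨hAS n hxA, hx.2⟩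
  refine ⟨C, isClopen_of_disjoint_cover_open hcover.ge hC hC' hdisj, ?_, ?_⟩
  · exact hAC'.subset_left_of_subset_union (hcover ▸ subset_univ A)
  · exact disjoint_iUnion_left.2 fun n => disjoint_sdiff_left.mono_right (hBT n)

theorem ultranormal_of_isLocallyConstant {α : ℕ → Type*} {f : ∀ n, X → α n}
    (hf : ∀ n, IsLocallyConstant (f n))
    (hbasis : ∀ x, ∀ W ∈ 𝓝 x, ∃ n, f n ⁻¹' {f n x} ⊆ W) : Ultranormal X := by
  intro A B hA hB hAB
  let saturation (S : Set X) (n : ℕ) : Set X := f n ⁻¹' (f n '' S)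
  have isClopen_saturation (S : Set X) (n : ℕ) : IsClopen (saturation S n) :=
    ⟨⟨hf n (f n '' S)ᶜ⟩, hf n _⟩
  have subset_saturation (S : Set X) (n : ℕ) : S ⊆ saturation S n := subset_preimage_image _ _
  have iInter_saturation {S : Set X} (hS : IsClosed S) : ⋂ n, saturation S n ⊆ S := by
    intro x hx
    by_contra hxS
    obtain ⟨n, hn⟩ := hbasis x Sᶜ (hS.isOpen_compl.mem_nhds hxS)
    obtain ⟨y, hyS, hyx⟩ := mem_iInter.1 hx n
    exact hn hyx hyS
  refine exists_isClopen_of_iInter_eq_empty (isClopen_saturation A) (isClopen_saturation B)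
    (subset_saturation A) (subset_saturation B) ?_
  rw [iInter_inter_distrib, ← disjoint_iff_inter_eq_empty]
  exact hAB.mono (iInter_saturation hA) (iInter_saturation hB)

theorem Ultranormal.exists_isClosed_extension {D : Set X} (hD : Ultranormal D) (hDc : IsClosed D)
    {A B : Set X} (hA : IsClosed A) (hB : IsClosed B) (hAB : Disjoint A B) :
    ∃ A' B' : Set X, IsClosed A' ∧ IsClosed B' ∧ Disjoint A' B' ∧
      A ⊆ A' ∧ B ⊆ B' ∧ D ⊆ A' ∪ B' := by
  obtain ⟨C, hC, hAC, hCB⟩ := hD (hA.preimage continuous_subtype_val)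
    (hB.preimage continuous_subtype_val) (hAB.preimage _)
  have isClosedMap_val := hDc.isClosedMap_subtype_val
  refine ⟨A ∪ (↑) '' C, B ∪ (↑) '' Cᶜ, hA.union (isClosedMap_val _ hC.isClosed),
    hB.union (isClosedMap_val _ hC.compl.isClosed), ?_, subset_union_left, subset_union_left, ?_⟩
  · have hACc : Disjoint A ((↑) '' Cᶜ) :=
      disjoint_image_right.2 (disjoint_compl_right.mono_left hAC)
    have hCB' : Disjoint ((↑) '' C) B := disjoint_image_left.2 hCB
    have hCC : Disjoint (((↑) : D → X) '' C) ((↑) '' Cᶜ) :=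
      (disjoint_image_iff Subtype.val_injective).2 disjoint_compl_right
    exact disjoint_union_left.2 ⟨disjoint_union_right.2 ⟨hAB, hACc⟩,
      disjoint_union_right.2 ⟨hCB', hCC⟩⟩
  · intro x hx
    by_cases hxC : (⟨x, hx⟩ : D) ∈ C
    · exact Or.inl (Or.inr ⟨_, hxC, rfl⟩)
    · exact Or.inr (Or.inr ⟨_, hxC, rfl⟩)

theorem Ultranormal.exists_isClosed_disjoint_subset_interior [NormalSpace X] {D : Set X}
    (hD : Ultranormal D) (hDc : IsClosed D) {A B : Set X} (hA : IsClosed A) (hB : IsClosed B)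
    (hAB : Disjoint A B) :
    ∃ A' B' : Set X, (IsClosed A' ∧ IsClosed B' ∧ Disjoint A' B') ∧
      A ⊆ interior A' ∧ B ⊆ interior B' ∧ D ⊆ interior A' ∪ interior B' := by
  obtain ⟨A₁, B₁, hA₁, hB₁, hAB₁, hAA₁, hBB₁, hDAB⟩ := hD.exists_isClosed_extension hDc hA hB hAB
  obtain ⟨P, hP, hAP, hPB⟩ := normal_exists_closure_subset hA₁ hB₁.isOpen_compl
    (subset_compl_iff_disjoint_right.2 hAB₁)
  obtain ⟨Q, hQ, hBQ, hQP⟩ := normal_exists_closure_subset hB₁ isClosed_closure.isOpen_compl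
    (subset_compl_comm.1 hPB)
  replace hAP := hAP.trans hP.subset_interior_closure
  replace hBQ := hBQ.trans hQ.subset_interior_closure
  exact ⟨closure P, closure Q,
    ⟨isClosed_closure, isClosed_closure, subset_compl_iff_disjoint_left.1 hQP⟩,
    hAA₁.trans hAP, hBB₁.trans hBQ, hDAB.trans (union_subset_union hAP hBQ)⟩

theorem ultranormal_of_iUnion_nat [NormalSpace X] {D : ℕ → Set X} (hDc : ∀ n, IsClosed (D n))
    (hD : ∀ n, Ultranormal (D n)) (hcover : ⋃ n, D n = univ) : Ultranormal X := by
  intro A B hA hB hAB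
  let ClosedPair := {p : Set X × Set X // IsClosed p.1 ∧ IsClosed p.2 ∧ Disjoint p.1 p.2}
  have exists_enlargement (n : ℕ) (p : ClosedPair) : ∃ q : ClosedPair, p.1.1 ⊆ interior q.1.1 ∧
      p.1.2 ⊆ interior q.1.2 ∧ D n ⊆ interior q.1.1 ∪ interior q.1.2 := by
    obtain ⟨⟨F, G⟩, hF, hG, hFG⟩ := p
    obtain ⟨F', G', hclosed, hsub⟩ :=
      (hD n).exists_isClosed_disjoint_subset_interior (hDc n) hF hG hFG
    exact ⟨⟨⟨F', G'⟩, hclosed⟩, hsub⟩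
  choose enlarge hfst hsnd hDenlarge using exists_enlargement
  let p : ℕ → ClosedPair := fun n => Nat.rec ⟨⟨A, B⟩, hA, hB, hAB⟩ enlarge n
  let P (n : ℕ) : Set X := interior (p (n + 1)).1.1
  let Q (n : ℕ) : Set X := interior (p (n + 1)).1.2
  have hP : Monotone P := monotone_nat_of_le_succ fun n =>
    interior_subset.trans (hfst (n + 1) (p (n + 1)))
  have hQ : Monotone Q := monotone_nat_of_le_succ fun n =>
    interior_subset.trans (hsnd (n + 1) (p (n + 1)))
  have hPQ : Disjoint (⋃ n, P n) (⋃ n, Q n) := by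
    refine disjoint_iUnion_left.2 fun n => disjoint_iUnion_right.2 fun m => ?_
    exact (p (max n m + 1)).2.2.2.mono ((hP (le_max_left n m)).trans interior_subset)
      ((hQ (le_max_right n m)).trans interior_subset)
  have hcoverPQ : univ ⊆ (⋃ n, P n) ∪ ⋃ n, Q n := by
    rw [← hcover, ← iUnion_union_distrib]
    exact iUnion_mono fun n => hDenlarge n (p n)
  refine ⟨⋃ n, P n, isClopen_of_disjoint_cover_open hcoverPQ
    (isOpen_iUnion fun _ => isOpen_interior) (isOpen_iUnion fun _ => isOpen_interior) hPQ, ?_, ?_⟩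
  · exact subset_iUnion_of_subset 0 (hfst 0 (p 0))
  · exact hPQ.mono_right (subset_iUnion_of_subset 0 (hsnd 0 (p 0)))

theorem ultranormal_of_iUnion [NormalSpace X] {ι : Type*} [Countable ι] {D : ι → Set X}
    (hDc : ∀ i, IsClosed (D i)) (hD : ∀ i, Ultranormal (D i)) (hcover : ⋃ i, D i = univ) :
    Ultranormal X := by
  cases isEmpty_or_nonempty ι with
  | inl _ =>
    have : IsEmpty X := univ_eq_empty_iff.1 (hcover ▸ iUnion_of_empty D)
    exact fun A B _ _ _ => ⟨∅, isClopen_empty, (eq_empty_of_isEmpty A).le, empty_disjoint B⟩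
  | inr _ =>
    obtain ⟨e, he⟩ := exists_surjective_nat ι
    exact ultranormal_of_iUnion_nat (fun n => hDc (e n)) (fun n => hD (e n))
      ((he.iUnion_comp D).trans hcover)

theorem exists_pairwise_disjoint_isOpen_subset {ι : Type*} {C : ι → Set X}
    (hC : ∀ i, IsClopen (C i)) (hfin : LocallyFinite C) :
    ∃ E : ι → Set X, (∀ i, IsOpen (E i)) ∧ (∀ i, E i ⊆ C i) ∧
      Pairwise (Function.onFun Disjoint E) ∧ ⋃ i, E i = ⋃ i, C i := by
  obtain ⟨_, _⟩ := exists_wellFoundedLT ι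
  let E : ι → Set X := fun i => C i \ ⋃ j : Iio i, C j
  have hdisj_of_lt {i j : ι} (hij : i < j) : Disjoint (E i) (E j) :=
    disjoint_sdiff_right.mono_left
      (sdiff_subset.trans (subset_iUnion_of_subset ⟨i, hij⟩ Subset.rfl))
  refine ⟨E, fun i => ?_, fun i => sdiff_subset, fun i j hij => ?_, ?_⟩
  · have hclosed : IsClosed (⋃ j : Iio i, C j) :=
      (hfin.comp_injective Subtype.val_injective).isClosed_iUnion fun j => (hC j).isClosed
    exact (hC i).isOpen.sdiff hclosed
  · exact hij.lt_or_gt.elim hdisj_of_lt fun hji => (hdisj_of_lt hji).symm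
  · refine (iUnion_mono fun i => sdiff_subset).antisymm fun x hx => ?_
    obtain ⟨i, hxi, hmin⟩ := wellFounded_lt.has_min {i | x ∈ C i} (mem_iUnion.1 hx)
    refine mem_iUnion.2 ⟨i, hxi, fun hx' => ?_⟩
    obtain ⟨j, hxj⟩ := mem_iUnion.1 hx'
    exact hmin j hxj j.2

theorem Ultranormal.ultraparacompact [NormalSpace X] [ParacompactSpace X] (h : Ultranormal X) :
    Ultraparacompact X := by
  rintro 𝒰 ⟨hopen, hcover⟩
  obtain ⟨v, hv, hvcover, hvfin, hvU⟩ := precise_refinement ((↑) : 𝒰 → Set X)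
    (fun U => hopen U U.2) (by rw [← sUnion_eq_iUnion, hcover])
  obtain ⟨w, hwcover, hw, hwv⟩ := exists_iUnion_eq_closed_subset hv hvfin.point_finite hvcover
  choose C hC hwC hCv using fun U =>
    h (hw U) (hv U).isClosed_compl (disjoint_compl_right_iff_subset.2 (hwv U))
  replace hCv : ∀ U, C U ⊆ v U := fun U => disjoint_compl_right_iff_subset.1 (hCv U)
  obtain ⟨E, hE, hEC, hdisj, hEunion⟩ := exists_pairwise_disjoint_isOpen_subset hC
    (hvfin.subset hCv)
  refine ⟨range E, ?_, hdisj.range_pairwise, ?_⟩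
  · rintro _ ⟨U, rfl⟩
    exact ⟨hE U, U, U.2, (hEC U).trans ((hCv U).trans (hvU U))⟩
  · rw [sUnion_range, hEunion, ← univ_subset_iff, ← hwcover]
    exact iUnion_mono hwC

/-- A sequence of open covers such that the closures of the members whose closure contains a given
point `x` eventually shrink to `x`. It stands in for covers by balls of radius tending to zero, and
is stated with closures because TWO's answers are used only through their closures. -/
structure IsClosureDevelopment (𝒰 : ℕ → Set (Set X)) : Prop where
  isOpenCover : ∀ n, IsOpenCover (𝒰 n)
  exists_closure_subset : ∀ x, ∀ W ∈ 𝓝 x, ∃ n, ∀ U ∈ 𝒰 n, x ∈ closure U → closure U ⊆ W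

theorem exists_isClosureDevelopment (X : Type*) [TopologicalSpace X]
    [TopologicalSpace.PseudoMetrizableSpace X] :
    ∃ 𝒰 : ℕ → Set (Set X), IsClosureDevelopment 𝒰 := by
  let _ := TopologicalSpace.pseudoMetrizableSpacePseudoMetric X
  refine ⟨fun n => range fun x : X => Metric.ball x (1 / ((n : ℝ) + 1)), fun n => ⟨?_, ?_⟩, ?_⟩
  · exact forall_mem_range.2 fun x => Metric.isOpen_ball
  · exact eq_univ_of_forall fun x => ⟨_, mem_range_self x, Metric.mem_ball_self (by positivity)⟩
  · intro x W hW
    obtain ⟨ε, hε, hεW⟩ := Metric.mem_nhds_iff.1 hW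
    obtain ⟨n, hn⟩ := exists_nat_one_div_lt (half_pos hε)
    refine ⟨n, forall_mem_range.2 fun y hxy z hzy => hεW ?_⟩
    have hx := Metric.mem_closedBall.1 (Metric.closure_ball_subset_closedBall hxy)
    have hz := Metric.mem_closedBall.1 (Metric.closure_ball_subset_closedBall hzy)
    rw [Metric.mem_ball]
    linarith [dist_triangle_right z x y]

theorem IsClosureDevelopment.ultranormal_iInter_closure {𝒰 𝒱 : ℕ → Set (Set X)}
    (h𝒰 : IsClosureDevelopment 𝒰) (h𝒱 : ∀ n, LegalTwoMove (𝒰 n) (𝒱 n)) :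
    Ultranormal (⋂ n, closure (⋃₀ 𝒱 n) : Set X) := by
  let D : Set X := ⋂ n, closure (⋃₀ 𝒱 n)
  have hD (n : ℕ) (x : D) : ∃ V ∈ 𝒱 n, (x : X) ∈ closure V :=
    (h𝒱 n).1.mem_closure_sUnion.1 (mem_iInter.1 x.2 n)
  choose V hV hxV using hD
  refine ultranormal_of_isLocallyConstant (f := V)
    (fun n => (h𝒱 n).1.isLocallyConstant continuous_subtype_val (hV n) (hxV n)) fun x W hW => ?_
  obtain ⟨W', hW', hW'W⟩ := mem_nhds_subtype D x W |>.1 hW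
  obtain ⟨n, hn⟩ := h𝒰.exists_closure_subset x W' hW'
  refine ⟨n, fun y hy => hW'W ?_⟩
  have hyV : (y : X) ∈ closure (V n x) := (show V n y = V n x from hy) ▸ hxV n y
  obtain ⟨U, hU, hVU⟩ := ((h𝒱 n).2 _ (hV n x)).2
  exact hn U hU (closure_mono hVU (hxV n x)) (closure_mono hVU hyV)

/-- The strategy `τ` for TWO is winning in the game `G^ω_d(𝒪, 𝒪_Y)`. -/
def IsWinningStrategy (τ : List (Set (Set X)) → Set (Set X)) (Y : Set X) : Prop :=
  ∀ 𝒰 : ℕ → Set (Set X), (∀ n, IsOpenCover (𝒰 n)) →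
    (∀ n : ℕ, LegalTwoMove (𝒰 n) (τ (List.ofFn fun i : Fin (n + 1) => 𝒰 i))) ∧
    Y ⊆ ⋃ n : ℕ, ⋃₀ τ (List.ofFn fun i : Fin (n + 1) => 𝒰 i)

theorem IsWinningStrategy.legalTwoMove {τ : List (Set (Set X)) → Set (Set X)} {Y : Set X}
    (hτ : IsWinningStrategy τ Y) {s : List (Set (Set X))} (hs : ∀ 𝒰 ∈ s, IsOpenCover 𝒰)
    {𝒰 : Set (Set X)} (h𝒰 : IsOpenCover 𝒰) : LegalTwoMove 𝒰 (τ (s ++ [𝒰])) := by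
  let play : ℕ → Set (Set X) := fun n => s.getD n 𝒰
  have hplay : ∀ n, IsOpenCover (play n) := fun n => by
    rcases lt_or_ge n s.length with hn | hn
    · simpa [play, hn] using hs _ (List.getElem_mem hn)
    · simpa [play, hn] using h𝒰
  have hmove : play s.length = 𝒰 := by simp [play]
  have hhistory : (List.ofFn fun i : Fin s.length => play i) = s := by simp [play]
  have hlegal := (hτ play hplay).1 s.length
  rw [List.ofFn_succ_last] at hlegal
  simpa [hmove, hhistory] using hlegal

theorem exists_seq_eq_apply_ofFn {α : Type*} (f : List α → α) :
    ∃ k : ℕ → α, ∀ n, k n = f (List.ofFn fun i : Fin n => k i) := by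
  let history : ℕ → List α := fun n => Nat.rec [] (fun _ s => s ++ [f s]) n
  refine ⟨fun n => f (history n), fun n => congrArg f ?_⟩
  induction n with
  | zero => rfl
  | succ n ih => rw [List.ofFn_succ_last]; exact congrArg (fun s => s ++ [f (history n)]) ih

theorem IsWinningStrategy.exists_position_forall_mem {τ : List (Set (Set X)) → Set (Set X)}
    {Y : Set X} (hτ : IsWinningStrategy τ Y) {ι : Type*} {𝒰 : ι → Set (Set X)}
    (h𝒰 : ∀ i, IsOpenCover (𝒰 i)) {x : X} (hx : x ∈ Y) :
    ∃ s : List ι, ∀ i, x ∈ ⋃₀ τ (s.map 𝒰 ++ [𝒰 i]) := by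
  by_contra! hdodge
  choose dodge hdodge using hdodge
  obtain ⟨k, hk⟩ := exists_seq_eq_apply_ofFn dodge
  obtain ⟨n, hn⟩ := mem_iUnion.1 ((hτ (fun n => 𝒰 (k n)) fun n => h𝒰 (k n)).2 hx)
  refine hdodge (List.ofFn fun i : Fin n => k i) ?_
  rw [← hk n, List.map_ofFn]
  rwa [List.ofFn_succ_last] at hn

theorem IsClosureDevelopment.ultranormal_of_twoWinsGomega [NormalSpace X]
    {𝒰 : ℕ → Set (Set X)} (h𝒰 : IsClosureDevelopment 𝒰) (h : TwoWinsGomega X univ) :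
    Ultranormal X := by
  obtain ⟨τ, hτ⟩ : ∃ τ, IsWinningStrategy τ (univ : Set X) := h
  let D (s : List ℕ) : Set X := ⋂ n, closure (⋃₀ τ (s.map 𝒰 ++ [𝒰 n]))
  have hlegal (s : List ℕ) (n : ℕ) : LegalTwoMove (𝒰 n) (τ (s.map 𝒰 ++ [𝒰 n])) :=
    hτ.legalTwoMove (List.forall_mem_map.2 fun m _ => h𝒰.isOpenCover m) (h𝒰.isOpenCover n)
  have hcover : ⋃ s, D s = univ := eq_univ_of_forall fun x => by
    obtain ⟨s, hs⟩ := hτ.exists_position_forall_mem h𝒰.isOpenCover (mem_univ x)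
    exact mem_iUnion.2 ⟨s, mem_iInter.2 fun n => subset_closure (hs n)⟩
  exact ultranormal_of_iUnion (fun s => isClosed_iInter fun n => isClosed_closure)
    (fun s => h𝒰.ultranormal_iInter_closure (hlegal s)) hcover

theorem TwoWinsGomega.ultraparacompact [TopologicalSpace.PseudoMetrizableSpace X]
    (h : TwoWinsGomega X univ) : Ultraparacompact X := by
  let _ := TopologicalSpace.pseudoMetrizableSpacePseudoMetric X
  obtain ⟨𝒰, h𝒰⟩ := exists_isClosureDevelopment X
  exact (h𝒰.ultranormal_of_twoWinsGomega h).ultraparacompact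

end

theorem statement12_general {X : Type*} [TopologicalSpace X]
    [TopologicalSpace.PseudoMetrizableSpace X] :
    (TwoWinsGomega X Set.univ ↔ Ultraparacompact X) ∧
    (Ultraparacompact X ↔ TwoWinsGone X Set.univ) :=
  ⟨⟨TwoWinsGomega.ultraparacompact, fun h =>
    (ultraparacompact_iff_twoWinsGone.1 h).twoWinsGomega⟩, ultraparacompact_iff_twoWinsGone⟩

/-- For metrizable `X`: TWO wins `G^ω_d(𝒪,𝒪)` iff `X` is
ultraparacompact iff TWO wins `G^1_d(𝒪,𝒪)`. -/
theorem statement12 {X : Type*} [TopologicalSpace X] [TopologicalSpace.MetrizableSpace X] :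
    (TwoWinsGomega X Set.univ ↔ Ultraparacompact X) ∧
    (Ultraparacompact X ↔ TwoWinsGone X Set.univ) :=
  statement12_general

end SSG
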